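/- Let ℓ̂_1,…,ℓ̂_K be nonnegative reals such that ℓ̂_i · ℓ̂_j = 0 whenever i ≠ j (at most one is nonzero), and let α_1,…,α_K and β be reals with 0 ≤ α_i ≤ β for all i. Then exp(∑_{i=1}^K (α_i/β) · log(1 + β ℓ̂_i)) ≤ ∏_{i=1}^K (1 + α_i ℓ̂_i) = 1 + ∑_{i=1}^K α_i ℓ̂_i. -/

import Mathlib

open Finset Real

/-- **Chaining step of the IX concentration lemma.**  Let `ℓ̂ i ≥ 0` with
`ℓ̂ i · ℓ̂ j = 0` for `i ≠ j` (at most one is nonzero), and let `0 ≤ α i ≤ β`.  Then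
`exp(∑_i (α i / β) log(1 + β ℓ̂ i)) ≤ ∏_i (1 + α i ℓ̂ i) = 1 + ∑_i α i ℓ̂ i`. -/
theorem ix_chaining_step
    (K : ℕ) (hatℓ : Fin K → ℝ) (hℓ_nonneg : ∀ i, 0 ≤ hatℓ i)
    (hℓ_orth : ∀ i j, i ≠ j → hatℓ i * hatℓ j = 0)
    (α : Fin K → ℝ) (β : ℝ)
    (hα_nonneg : ∀ i, 0 ≤ α i) (hα_le : ∀ i, α i ≤ β) :
    Real.exp (∑ i, (α i / β) * Real.log (1 + β * hatℓ i)) ≤ ∏ i, (1 + α i * hatℓ i) ∧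
    ∏ i, (1 + α i * hatℓ i) = 1 + ∑ i, α i * hatℓ i := by
  constructor
  · rw [Real.exp_sum]
    apply Finset.prod_le_prod
    · intro i _
      exact (Real.exp_pos _).le
    · intro i _
      have hβ : 0 ≤ β := (hα_nonneg i).trans (hα_le i)
      rcases hβ.eq_or_lt with h0 | hpos
      · have : α i = 0 := le_antisymm (h0 ▸ hα_le i) (hα_nonneg i)
        simp [this]
      · have hy : 0 ≤ β * hatℓ i := mul_nonneg hβ (hℓ_nonneg i)
        have h := rpow_one_add_le_one_add_mul_self (s := β * hatℓ i) (by linarith)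
          (p := α i / β) (div_nonneg (hα_nonneg i) hβ) ((div_le_one hpos).2 (hα_le i))
        rw [Real.rpow_def_of_pos (by linarith)] at h
        rw [mul_comm (α i / β)]
        refine h.trans (le_of_eq ?_)
        field_simp
  · by_cases h : ∃ i, hatℓ i ≠ 0
    · obtain ⟨i, hi⟩ := h
      have hz : ∀ j, j ≠ i → hatℓ j = 0 := fun j hj =>
        (mul_eq_zero.1 (hℓ_orth j i hj)).resolve_right hi
      rw [Fintype.prod_eq_single i (fun j hj => by simp [hz j hj]),
        Fintype.sum_eq_single i (fun j hj => by simp [hz j hj])]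
    · have hz : ∀ j, hatℓ j = 0 := fun j => by
        by_contra hj
        exact h ⟨j, hj⟩
      simp [hz]
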